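/- arXiv:1012.5043 — 2 statements merged into one kernel-verified Lean document; each statement's English description precedes it below -/
import Mathlib

section
/- Let k ≥ 1, n = 2^k, and identify [n] with {0,1}^k. Let x ∈ {0,1}^n (indexed by {0,1}^k), let i ≠ j be elements of {0,1}^k, and let H_n be the n×n Hadamard matrix with entries H_n[a,i] = (−1)^{a·i}/√n for a,i ∈ {0,1}^k. Let ψ ∈ ℝ^n ⊗ ℝ^n be the unit vector ψ = ((−1)^{x_i} e_i ⊗ e_i + (−1)^{x_j} e_j ⊗ e_j)/√2, and let φ = (H_n ⊗ H_n) ψ. Then φ is a unit vector, and every pair (a,b) ∈ {0,1}^k × {0,1}^k with φ_{a,b} ≠ 0 satisfies (a·(i⊕j)) ⊕ (b·(i⊕j)) = x_i ⊕ x_j, where · denotes the inner product mod 2 on {0,1}^k and ⊕ is bitwise XOR. -/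
open scoped Classical
open Finset

/-- Inner product mod 2 on `{0,1}^k`, as a Boolean. -/
def bdot {k : ℕ} (a b : Fin k → Bool) : Bool :=
  decide ((Finset.univ.filter fun t => a t && b t).card % 2 = 1)

/-- Bitwise XOR on `{0,1}^k`. -/
def bxor {k : ℕ} (a b : Fin k → Bool) : Fin k → Bool := fun t => xor (a t) (b t)


/-- The sign of a Boolean. -/
noncomputable def hmSgn (b : Bool) : ℝ := if b then (-1 : ℝ) else 1

lemma hmSgn_sq (b : Bool) : hmSgn b * hmSgn b = 1 := by
  cases b <;> simp [hmSgn]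

lemma hmSgn_xor (a b : Bool) : hmSgn (xor a b) = hmSgn a * hmSgn b := by
  cases a <;> cases b <;> simp [hmSgn]

lemma hmSgn_and_xor (a b c : Bool) :
    hmSgn (a && xor b c) = hmSgn (a && b) * hmSgn (a && c) := by
  cases a <;> cases b <;> cases c <;> simp [hmSgn]

lemma hmSgn_bdot {k : ℕ} (a b : Fin k → Bool) :
    hmSgn (bdot a b) = ∏ t, hmSgn (a t && b t) := by
  have h : ∏ t, hmSgn (a t && b t)
      = (-1 : ℝ) ^ (Finset.univ.filter fun t => a t && b t).card := by
    unfold hmSgn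
    rw [Finset.prod_ite]
    simp
  rw [h]
  unfold bdot hmSgn
  rcases Nat.even_or_odd (Finset.univ.filter fun t => a t && b t).card with h2 | h2
  · rw [h2.neg_one_pow]
    rw [Nat.even_iff] at h2
    rw [h2]
    simp
  · rw [h2.neg_one_pow]
    rw [Nat.odd_iff] at h2
    rw [h2]
    simp

lemma hmSgn_bdot_bxor {k : ℕ} (a i j : Fin k → Bool) :
    hmSgn (bdot a (bxor i j)) = hmSgn (bdot a i) * hmSgn (bdot a j) := by
  simp only [hmSgn_bdot, bxor, hmSgn_and_xor, Finset.prod_mul_distrib]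

lemma hmSgn_sum {k : ℕ} (i j : Fin k → Bool) (hij : i ≠ j) :
    ∑ a : Fin k → Bool, hmSgn (bdot a (bxor i j)) = 0 := by
  simp only [hmSgn_bdot]
  have h := Fintype.prod_sum (fun (t : Fin k) (c : Bool) => hmSgn (c && bxor i j t))
  rw [← h]
  obtain ⟨t, ht⟩ := Function.ne_iff.mp hij
  apply Finset.prod_eq_zero (Finset.mem_univ t)
  have h3 : bxor i j t = true := by simpa [bxor] using ht
  simp [h3, hmSgn]

/-- With `n = 2^k`, `[n]` identified with `{0,1}^k`, `x ∈ {0,1}^n`,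
`i ≠ j` in `{0,1}^k`, `H` the `n×n` Hadamard matrix `H[a,i] = (−1)^{a·i}/√n`,
`ψ = ((−1)^{x_i} e_i ⊗ e_i + (−1)^{x_j} e_j ⊗ e_j)/√2` and `φ = (H ⊗ H) ψ`:
`φ` is a unit vector, and every `(a, b)` with `φ_{a,b} ≠ 0` satisfies
`(a·(i⊕j)) ⊕ (b·(i⊕j)) = x_i ⊕ x_j`. -/
theorem hidden_matching_nonlocal_quantum_strategy
    (k : ℕ) (hk : 1 ≤ k)
    (x : (Fin k → Bool) → Bool) (i j : Fin k → Bool) (hij : i ≠ j)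
    (H : (Fin k → Bool) → (Fin k → Bool) → ℝ)
    (hH : H = fun a i => (if bdot a i then (-1 : ℝ) else 1) / Real.sqrt (2 ^ k))
    (ψ : (Fin k → Bool) × (Fin k → Bool) → ℝ)
    (hψ : ψ = fun p =>
      ((if x i then (-1 : ℝ) else 1) * (if p.1 = i ∧ p.2 = i then 1 else 0)
        + (if x j then (-1 : ℝ) else 1) * (if p.1 = j ∧ p.2 = j then 1 else 0))
        / Real.sqrt 2)
    (φ : (Fin k → Bool) × (Fin k → Bool) → ℝ)
    (hφ : φ = fun q => ∑ p : (Fin k → Bool) × (Fin k → Bool),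
      H q.1 p.1 * H q.2 p.2 * ψ p) :
    (∑ q : (Fin k → Bool) × (Fin k → Bool), φ q ^ 2) = 1 ∧
    ∀ a b : Fin k → Bool, φ (a, b) ≠ 0 →
      xor (bdot a (bxor i j)) (bdot b (bxor i j)) = xor (x i) (x j) := by
  have hφ' : ∀ a b, φ (a, b) = (hmSgn (x i) * hmSgn (bdot a i) * hmSgn (bdot b i)
      + hmSgn (x j) * hmSgn (bdot a j) * hmSgn (bdot b j)) / (Real.sqrt 2 * 2 ^ k) := by
    intro a b
    have h2 : Real.sqrt (2 ^ k) * Real.sqrt (2 ^ k) = 2 ^ k :=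
      Real.mul_self_sqrt (by positivity)
    have key : ∀ (c d : ℝ), ∑ p : (Fin k → Bool) × (Fin k → Bool), H a p.1 * H b p.2 *
        ((c * (if p.1 = i ∧ p.2 = i then 1 else 0) + d * (if p.1 = j ∧ p.2 = j then 1 else 0))
          / Real.sqrt 2)
        = (c * (H a i * H b i) + d * (H a j * H b j)) / Real.sqrt 2 := by
      intro c d
      have e : ∀ p : (Fin k → Bool) × (Fin k → Bool), H a p.1 * H b p.2 *
        ((c * (if p.1 = i ∧ p.2 = i then 1 else 0) + d * (if p.1 = j ∧ p.2 = j then 1 else 0))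
          / Real.sqrt 2) = (if p = (i, i) then c * (H a i * H b i) / Real.sqrt 2 else 0)
          + (if p = (j, j) then d * (H a j * H b j) / Real.sqrt 2 else 0) := by
        rintro ⟨p, q⟩
        have h1 : ((p, q) = (i, i)) ↔ (p = i ∧ q = i) := Prod.mk_inj
        have h2 : ((p, q) = (j, j)) ↔ (p = j ∧ q = j) := Prod.mk_inj
        simp only [h1, h2]
        by_cases hi : p = i ∧ q = i
        · have hj : ¬ (p = j ∧ q = j) := fun h => hij (hi.1.symm.trans h.1)
          rw [if_pos hi, if_neg hj, if_pos hi, if_neg hj, hi.1, hi.2]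
          ring
        · by_cases hj : p = j ∧ q = j
          · rw [if_neg hi, if_pos hj, if_neg hi, if_pos hj, hj.1, hj.2]
            ring
          · rw [if_neg hi, if_neg hj, if_neg hi, if_neg hj]
            ring
      rw [Finset.sum_congr rfl (fun p _ => e p), Finset.sum_add_distrib,
        Finset.sum_ite_eq', Finset.sum_ite_eq']
      simp only [Finset.mem_univ, if_true]
      ring
    have hHs : ∀ u v, H u v = hmSgn (bdot u v) / Real.sqrt (2 ^ k) := by
      intro u v
      rw [hH]
      rfl
    have h3 : φ (a, b) = (hmSgn (x i) * (H a i * H b i) + hmSgn (x j) * (H a j * H b j))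
        / Real.sqrt 2 := by
      rw [hφ, hψ]
      exact key _ _
    rw [h3]
    simp only [hHs, div_mul_div_comm, h2]
    have : (2 : ℝ) ^ k ≠ 0 := by positivity
    have : Real.sqrt 2 ≠ 0 := by positivity
    field_simp
  constructor
  · have hsq : ∀ a b, φ (a, b) ^ 2 = 1 / (2 ^ k * 2 ^ k) + hmSgn (x i) * hmSgn (x j)
        / (2 ^ k * 2 ^ k) * (hmSgn (bdot a (bxor i j)) * hmSgn (bdot b (bxor i j))) := by
      intro a b
      rw [hφ', hmSgn_bdot_bxor, hmSgn_bdot_bxor, div_pow, mul_pow,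
        Real.sq_sqrt (by norm_num)]
      have h1 := hmSgn_sq (x i)
      have h2 := hmSgn_sq (x j)
      have h3 := hmSgn_sq (bdot a i)
      have h4 := hmSgn_sq (bdot a j)
      have h5 := hmSgn_sq (bdot b i)
      have h6 := hmSgn_sq (bdot b j)
      generalize hmSgn (x i) = X at *
      generalize hmSgn (x j) = Y at *
      generalize hmSgn (bdot a i) = A at *
      generalize hmSgn (bdot a j) = B at *
      generalize hmSgn (bdot b i) = C at *
      generalize hmSgn (bdot b j) = D at *
      have e : (X * A * C + Y * B * D) ^ 2 = 2 + 2 * (X * Y * (A * B * (C * D))) := by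
        have : (X * A * C + Y * B * D) ^ 2 = (X * X) * (A * A) * (C * C)
          + (Y * Y) * (B * B) * (D * D) + 2 * (X * Y * (A * B * (C * D))) := by ring
        rw [this, h1, h2, h3, h4, h5, h6]
        ring
      rw [e]
      have : (2 : ℝ) ^ k ≠ 0 := by positivity
      field_simp
    rw [Fintype.sum_prod_type]
    simp only [hsq, Finset.sum_add_distrib, ← Finset.mul_sum, hmSgn_sum i j hij]
    simp
  · intro a b hab
    rw [hφ'] at hab
    by_contra hne
    apply hab
    have h1 : hmSgn (xor (bdot a (bxor i j)) (bdot b (bxor i j)))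
        = - hmSgn (xor (x i) (x j)) := by
      revert hne
      generalize xor (bdot a (bxor i j)) (bdot b (bxor i j)) = u
      generalize xor (x i) (x j) = v
      cases u <;> cases v <;> simp [hmSgn]
    rw [hmSgn_xor, hmSgn_xor, hmSgn_bdot_bxor, hmSgn_bdot_bxor] at h1
    have h2 := hmSgn_sq (x j)
    have h3 := hmSgn_sq (bdot a i)
    have h5 := hmSgn_sq (bdot b i)
    have h4 := hmSgn_sq (x i)
    generalize hmSgn (x i) = X at *
    generalize hmSgn (x j) = Y at *
    generalize hmSgn (bdot a i) = A at *
    generalize hmSgn (bdot a j) = B at *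
    generalize hmSgn (bdot b i) = C at *
    generalize hmSgn (bdot b j) = D at *
    have e : X * A * C + Y * B * D = 0 := by
      have e1 : Y * B * D = Y * (A * A) * (C * C) * B * D := by rw [h3, h5]; ring
      have e2 : Y * (A * A) * (C * C) * B * D = Y * A * C * (A * B * (C * D)) := by ring
      have e3 : Y * A * C * -(X * Y) = -(X * A * C) * (Y * Y) := by ring
      rw [e1, e2, h1, e3, h2]
      ring
    rw [e, zero_div]
end

section
/- There exist constants K > 0 and n₀ such that for every n = 2^k with n ≥ n₀ there exists a strategy with shared randomness (a probability distribution over deterministic strategies) for the non-local Hidden Matching game HM_nl(n) such that for every input pair (x, M), the probability over the shared randomness of winning is at least 1/2 + K/√n. -/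
open scoped Classical
open Finset

/-- A perfect matching on `{0,1}^k`, represented as a fixed-point-free involution:
the pair `(i, M i)` is matched for every `i`. -/
def MatchingV (k : ℕ) : Type :=
  {M : (Fin k → Bool) → (Fin k → Bool) // (∀ i, M (M i) = i) ∧ ∀ i, M i ≠ i}

noncomputable instance (k : ℕ) : Fintype (MatchingV k) :=
  Subtype.fintype _

/-- Lower bound `16^m ≤ 4 m (2m choose m)^2`. -/
lemma hm_cb (m : ℕ) (hm : 1 ≤ m) : 16 ^ m ≤ 4 * m * (Nat.centralBinom m) ^ 2 := by
  induction m, hm using Nat.le_induction with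
  | base => simp [Nat.centralBinom]
  | succ m hm ih =>
    have h := Nat.succ_mul_centralBinom_succ m
    have h2 : ((m + 1) * (m + 1).centralBinom) ^ 2 = (2 * (2 * m + 1) * m.centralBinom) ^ 2 := by
      rw [h]
    have h3 : 0 < m + 1 := by omega
    refine Nat.le_of_mul_le_mul_left ?_ h3
    calc (m + 1) * 16 ^ (m + 1) = 16 * (m + 1) * 16 ^ m := by ring
      _ ≤ 16 * (m + 1) * (4 * m * (Nat.centralBinom m) ^ 2) := Nat.mul_le_mul_left _ ih
      _ = (16 * (4 * m * (m + 1))) * (Nat.centralBinom m) ^ 2 := by ring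
      _ ≤ (16 * (2 * m + 1) ^ 2) * (Nat.centralBinom m) ^ 2 := by
          apply Nat.mul_le_mul_right; nlinarith
      _ = 4 * (2 * (2 * m + 1) * m.centralBinom) ^ 2 := by ring
      _ = 4 * ((m + 1) * (m + 1).centralBinom) ^ 2 := by rw [h2]
      _ = (m + 1) * (4 * (m + 1) * (m + 1).centralBinom ^ 2) := by ring

/-- Flip one coordinate. -/
def hmFlip {V : Type} [DecidableEq V] (j : V) (z : V → Bool) : V → Bool :=
  Function.update z j (!(z j))

lemma hmFlip_invol {V : Type} [DecidableEq V] (j : V) :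
    Function.Involutive (hmFlip j : (V → Bool) → V → Bool) := by
  intro z
  simp [hmFlip]

/-- Number of ones. -/
def hmCount {V : Type} [Fintype V] (z : V → Bool) : ℕ := (univ.filter fun t => z t = true).card

lemma hmCount_flip {V : Type} [Fintype V] [DecidableEq V] (j : V) (z : V → Bool)
    (h : z j = false) : hmCount (hmFlip j z) = hmCount z + 1 := by
  unfold hmCount
  rw [← Finset.card_insert_of_notMem (a := j) (s := univ.filter fun t => z t = true) (by simp [h])]
  congr 1
  ext t
  rw [Finset.mem_filter, Finset.mem_insert, Finset.mem_filter]
  by_cases ht : t = j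
  · subst ht; simp [hmFlip, h]
  · simp [hmFlip, ht]

lemma hm_maj {V : Type} [Fintype V] [DecidableEq V] (h : ℕ) (hV : Fintype.card V = 2 * h)
    (hh : 1 ≤ h) (j : V) :
    (2 : ℝ) ^ (2 * h) / 2 + (Nat.centralBinom h : ℝ) / 2 ≤
      ∑ z : V → Bool, (if decide (h < hmCount z) = z j then (1 : ℝ) else 0) := by
  set W : (V → Bool) → ℝ := fun z => if decide (h < hmCount z) = z j then (1 : ℝ) else 0 with hW
  set g : (V → Bool) → ℝ := fun z => if z j = false ∧ hmCount z = h then (1 : ℝ) else 0 with hg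
  have key0 : ∀ z : V → Bool, z j = false → W z + W (hmFlip j z) = 1 + g z + g (hmFlip j z) := by
    intro z hz
    have h1 := hmCount_flip j z hz
    have h2 : hmFlip j z j = true := by simp [hmFlip, hz]
    simp only [hW, hg, h1, h2, hz]
    rcases lt_trichotomy (hmCount z) h with h3 | h3 | h3
    · have a1 : ¬ h < hmCount z := by omega
      have a2 : ¬ h < hmCount z + 1 := by omega
      have a3 : hmCount z ≠ h := by omega
      simp [a1, a2, a3]
    · have a1 : ¬ h < hmCount z := by omega
      have a2 : h < hmCount z + 1 := by omega
      simp [a2, h3]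
    · have a1 : h < hmCount z := by omega
      have a2 : h < hmCount z + 1 := by omega
      have a3 : hmCount z ≠ h := by omega
      simp [a1, a2, a3]
  have key : ∀ z : V → Bool, W z + W (hmFlip j z) = 1 + g z + g (hmFlip j z) := by
    intro z
    cases hz : z j with
    | false => exact key0 z hz
    | true =>
      have := key0 (hmFlip j z) (by simp [hmFlip, hz])
      rw [hmFlip_invol j z] at this
      linarith
  have sW : ∑ z, W (hmFlip j z) = ∑ z, W z :=
    Equiv.sum_comp (hmFlip_invol j).toPerm W
  have sg : ∑ z, g (hmFlip j z) = ∑ z, g z :=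
    Equiv.sum_comp (hmFlip_invol j).toPerm g
  have tot : ∑ z, (W z + W (hmFlip j z)) = ∑ z, (1 + g z + g (hmFlip j z)) :=
    Finset.sum_congr rfl fun z _ => key z
  simp only [Finset.sum_add_distrib, sW, sg] at tot
  have hone : ∑ _z : V → Bool, (1 : ℝ) = 2 ^ (2 * h) := by
    simp [hV]
  rw [hone] at tot
  have hgc : (Nat.centralBinom h : ℝ) / 2 ≤ ∑ z, g z := by
    have e1 : ∑ z, g z = ((univ.filter fun z : V → Bool => z j = false ∧ hmCount z = h).card : ℝ) := by
      simp [hg]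
    have e2 : ((univ.erase j).powersetCard h).card ≤
        (univ.filter fun z : V → Bool => z j = false ∧ hmCount z = h).card := by
      apply Finset.card_le_card_of_injOn (fun S t => decide (t ∈ S))
      · intro S hS
        simp only [Finset.mem_coe, Finset.mem_powersetCard] at hS
        obtain ⟨hS1, hS2⟩ := hS
        have : j ∉ S := fun hj => by simpa using hS1 hj
        rw [Finset.mem_coe, Finset.mem_filter]
        refine ⟨Finset.mem_univ _, by simp [this], ?_⟩
        rw [← hS2, hmCount]
        congr 1
        ext t
        simp
      · intro S _ T _ hST
        ext t
        have := congrFun hST t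
        simpa using this
    rw [Finset.card_powersetCard, Finset.card_erase_of_mem (Finset.mem_univ j), Finset.card_univ, hV] at e2
    have e3 : Nat.centralBinom h = 2 * (2 * h - 1).choose h := by
      obtain ⟨m, rfl⟩ : ∃ m, h = m + 1 := ⟨h - 1, by omega⟩
      rw [Nat.centralBinom, show 2 * (m + 1) = (2 * m + 1) + 1 by ring, Nat.choose_succ_succ]
      have : (2 * m + 1).choose m = (2 * m + 1).choose (m + 1) :=
        (Nat.choose_symm_half m).symm
      simp [this]; ring
    rw [e1, e3]
    have : ((2 * h - 1).choose h : ℝ) ≤ _ := Nat.cast_le.mpr e2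
    push_cast
    linarith
  linarith

lemma hm_half {V : Type} [Fintype V] [DecidableEq V] (j : V) (n : ℕ) (hV : Fintype.card V = n) :
    ∑ z : V → Bool, (if false = z j then (1 : ℝ) else 0) = 2 ^ n / 2 := by
  have s1 : ∑ z : V → Bool, (if false = hmFlip j z j then (1 : ℝ) else 0)
      = ∑ z : V → Bool, (if false = z j then (1 : ℝ) else 0) :=
    Equiv.sum_comp (hmFlip_invol j).toPerm fun z => (if false = z j then (1 : ℝ) else 0)
  have s2 : ∑ z : V → Bool, ((if false = hmFlip j z j then (1 : ℝ) else 0)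
      + (if false = z j then (1 : ℝ) else 0)) = ∑ _z : V → Bool, (1 : ℝ) := by
    apply Finset.sum_congr rfl
    intro z _
    cases hz : z j <;> simp [hmFlip, hz]
  rw [Finset.sum_add_distrib, s1] at s2
  have hone : ∑ _z : V → Bool, (1 : ℝ) = 2 ^ n := by simp [hV]
  linarith

lemma bdot_flip {k : ℕ} (a j : Fin k → Bool) (t : Fin k) (ht : j t = true) :
    bdot (hmFlip t a) j = !(bdot a j) := by
  have key0 : ∀ a : Fin k → Bool, a t = false → bdot (hmFlip t a) j = !(bdot a j) := by
    intro a ha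
    have : (univ.filter fun s => (hmFlip t a s && j s) = true)
        = insert t (univ.filter fun s => (a s && j s) = true) := by
      ext s
      by_cases hs : s = t
      · subst hs; simp [hmFlip, ha, ht]
      · simp [hmFlip, hs]
    unfold bdot
    rw [this, Finset.card_insert_of_notMem (by simp [ha])]
    rw [← decide_not]
    congr 1
    apply propext
    omega
  cases ha : a t with
  | false => exact key0 a ha
  | true =>
    have := key0 (hmFlip t a) (by simp [hmFlip, ha])
    rw [hmFlip_invol t a] at this
    simp [this]

lemma hm_dot_half {k : ℕ} (j : Fin k → Bool) (hj : j ≠ fun _ => false) (p q : ℝ) :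
    ∑ a : Fin k → Bool, (if bdot a j = true then p else q) = 2 ^ k * ((p + q) / 2) := by
  obtain ⟨t, ht⟩ : ∃ t, j t = true := by
    by_contra hcon
    push Not at hcon
    exact hj (funext fun t => by simpa using hcon t)
  have s1 : ∑ a : Fin k → Bool, (if bdot (hmFlip t a) j = true then p else q)
      = ∑ a : Fin k → Bool, (if bdot a j = true then p else q) :=
    Equiv.sum_comp (hmFlip_invol t).toPerm fun a => (if bdot a j = true then p else q)
  have s2 : ∑ a : Fin k → Bool, ((if bdot (hmFlip t a) j = true then p else q)
      + (if bdot a j = true then p else q)) = ∑ _a : Fin k → Bool, (p + q) := by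
    apply Finset.sum_congr rfl
    intro a _
    rw [bdot_flip a j t ht]
    cases bdot a j <;> simp [add_comm]
  rw [Finset.sum_add_distrib, s1] at s2
  have hone : ∑ _a : Fin k → Bool, (p + q) = 2 ^ k * (p + q) := by simp [mul_add]
  linarith

lemma bdot_zero {k : ℕ} (j : Fin k → Bool) : bdot (fun _ => false) j = false := by
  simp [bdot]

lemma bxor_zero {k : ℕ} (j : Fin k → Bool) : bxor (fun _ => false) j = j := by
  funext t; simp [bxor]

/-- There are constants `K > 0` and `n₀` such that for every `n = 2^k ≥ n₀`
there is a strategy with shared randomness (a finitely supported probability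
distribution, with weights `w`, over deterministic strategies `(A r, Bob r)`) for the
non-local Hidden Matching game which, for EVERY input pair `(x, M)`, wins with
probability at least `1/2 + K/√n` over the shared randomness. -/
theorem hidden_matching_nonlocal_randomized_strategy :
    ∃ K : ℝ, 0 < K ∧ ∃ n₀ : ℕ,
      ∀ k : ℕ, n₀ ≤ 2 ^ k →
      ∃ (R : Type) (_ : Fintype R) (w : R → ℝ)
        (A : R → ((Fin k → Bool) → Bool) → (Fin k → Bool))
        (Bob : R → MatchingV k → (Fin k → Bool) × Bool),
        (∀ r, 0 ≤ w r) ∧ (∑ r, w r) = 1 ∧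
        ∀ (x : (Fin k → Bool) → Bool) (M : MatchingV k),
          1 / 2 + K / Real.sqrt (2 ^ k) ≤
            ∑ r, w r *
              (if xor (bdot (A r x) (bxor (Bob r M).1 (M.1 (Bob r M).1))) (Bob r M).2
                  = xor (x (Bob r M).1) (x (M.1 (Bob r M).1))
               then (1 : ℝ) else 0) := by
  refine ⟨1 / 8, by norm_num, 2, ?_⟩
  intro k hk
  obtain ⟨l, rfl⟩ : ∃ l, k = l + 1 := by
    cases k with
    | zero => simp at hk
    | succ l => exact ⟨l, rfl⟩
  set h : ℕ := 2 ^ l with hh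
  have h1 : 1 ≤ h := Nat.one_le_two_pow
  have hV : Fintype.card (Fin (l + 1) → Bool) = 2 * h := by simp [hh, pow_succ, mul_comm]
  set o : Fin (l + 1) → Bool := fun _ => false with ho
  refine ⟨(Fin (l + 1) → Bool) × ((Fin (l + 1) → Bool) → Bool), inferInstance,
    fun _ => 1 / (2 ^ (l + 1) * 2 ^ (2 * h)),
    fun r x => if h < hmCount (fun t => xor (xor (x o) (x t)) (r.2 t)) then r.1 else o,
    fun r M => (o, r.2 (M.1 o)), fun _ => by positivity, ?_, ?_⟩
  · rw [Finset.sum_const, Finset.card_univ, Fintype.card_prod, Fintype.card_fun (α := Fin (l+1) → Bool), hV]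
    simp
    field_simp
    rw [hh]; push_cast; ring
  · intro x M
    set j := M.1 o with hj
    have hj0 : j ≠ o := M.2.2 o
    simp only
    rw [← Finset.mul_sum, Fintype.sum_prod_type]
    have inv : Function.Involutive
        (fun (y : (Fin (l + 1) → Bool) → Bool) t => xor (xor (x o) (x t)) (y t)) := by
      intro y; funext t
      change xor (xor (x o) (x t)) (xor (xor (x o) (x t)) (y t)) = y t
      generalize x o = b1, x t = b2, y t = b3
      revert b1 b2 b3; decide
    have inner : ∀ a : Fin (l + 1) → Bool,
        (if bdot a j = true then (2 : ℝ) ^ (2 * h) / 2 + (Nat.centralBinom h : ℝ) / 2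
          else 2 ^ (2 * h) / 2) ≤
        ∑ y : (Fin (l + 1) → Bool) → Bool,
          (if xor (bdot (if h < hmCount (fun t => xor (xor (x o) (x t)) (y t)) then a else o)
              (bxor o j)) (y j) = xor (x o) (x j) then (1 : ℝ) else 0) := by
      intro a
      have e : ∀ y : (Fin (l + 1) → Bool) → Bool,
          (if xor (bdot (if h < hmCount (fun t => xor (xor (x o) (x t)) (y t)) then a else o)
              (bxor o j)) (y j) = xor (x o) (x j) then (1 : ℝ) else 0) =
          (fun z : (Fin (l + 1) → Bool) → Bool =>
            if (decide (h < hmCount z) && bdot a j) = z j then (1 : ℝ) else 0)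
          ((inv.toPerm _) y) := by
        intro y
        simp only [Function.Involutive.coe_toPerm, ho, bxor_zero]
        by_cases hc : h < hmCount (fun t => xor (xor (x fun _ => false) (x t)) (y t))
        · simp only [hc, if_true, decide_true, Bool.true_and]
          cases bdot a j <;> cases y j <;> cases x (fun _ => false) <;> cases x j <;> simp
        · simp only [hc, if_false, decide_false, Bool.false_and, bdot_zero]
          cases y j <;> cases x (fun _ => false) <;> cases x j <;> simp
      rw [Finset.sum_congr rfl fun y _ => e y, Equiv.sum_comp inv.toPerm
        (fun z : (Fin (l + 1) → Bool) → Bool =>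
            if (decide (h < hmCount z) && bdot a j) = z j then (1 : ℝ) else 0)]
      cases hb : bdot a j with
      | true => simpa using hm_maj h hV h1 j
      | false => simpa using (hm_half j (2 * h) hV).ge
    have tot := Finset.sum_le_sum fun a (_ : a ∈ (univ : Finset (Fin (l + 1) → Bool))) => inner a
    rw [hm_dot_half j hj0] at tot
    refine le_trans ?_ (mul_le_mul_of_nonneg_left tot (by positivity))
    have hcb : (16 : ℝ) ^ h ≤ 4 * h * (Nat.centralBinom h : ℝ) ^ 2 := by
      exact_mod_cast hm_cb h h1
    set c : ℝ := (Nat.centralBinom h : ℝ) with hc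
    set s := Real.sqrt (2 ^ (l + 1)) with hs
    have s2 : s ^ 2 = 2 * h := by
      rw [hs, Real.sq_sqrt (by positivity), hh]; push_cast; ring
    have spos : 0 < s := by positivity
    have hP : (2 : ℝ) ^ (2 * h) = 4 ^ h := by rw [pow_mul]; norm_num
    rw [hP]
    set P : ℝ := 4 ^ h with hPd
    have Ppos : 0 < P := by positivity
    have hPP : (16 : ℝ) ^ h = P ^ 2 := by rw [hPd, ← pow_mul, mul_comm, pow_mul]; norm_num
    have hle : P ≤ 2 * s * c := by
      have c0 : 0 ≤ c := Nat.cast_nonneg _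
      refine (sq_le_sq₀ Ppos.le (by positivity)).mp ?_
      rw [← hPP]; nlinarith [mul_nonneg (sq_nonneg s) (sq_nonneg c)]
    have : 1 / (2 ^ (l + 1) * P) * (2 ^ (l + 1) * ((P / 2 + c / 2 + P / 2) / 2)) = 1 / 2 + c / (4 * P) := by
      field_simp; ring
    rw [this]
    have : 1 / 8 / s ≤ c / (4 * P) := by
      rw [div_div, div_le_div_iff₀ (by positivity) (by positivity)]
      linarith
    linarith
end
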